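/- Let (T, R, A) be weakly G-approximable. Then for every i ∈ ℤ and every F ∈ R_i there is a sequence E_1 → E_2 → E_3 → ⋯ with compatible maps to F such that Cone(E_n → F) ∈ R_{i+n} and E_n ∈ Ḡ^{(-∞,A-i]} for all n ≥ 1, the non-canonical map Hocolim E_n → F is an isomorphism, and in particular F ∈ Ḡ^{(-∞,A-i+1]}. The analogous statement holds for F ∈ R_i ∩ T̄^c when (T, R, A) is only weakly G-quasiapproximable. -/

import Mathlib

namespace GApprox

open CategoryTheory CategoryTheory.Limits CategoryTheory.Pretriangulated

universe w v u

variable (C : Type u) [Category.{v} C] [HasZeroObject C] [HasShift C ℤ]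
  [Preadditive C] [∀ n : ℤ, (shiftFunctor C n).Additive] [Pretriangulated C]
  [HasCoproducts.{v} C]

/-- The right orthogonal of a class of objects. -/
def rOrth (A : Set C) : Set C := {X | ∀ a ∈ A, ∀ f : a ⟶ X, f = 0}

/-- The left orthogonal of a class of objects. -/
def lOrth (A : Set C) : Set C := {X | ∀ a ∈ A, ∀ f : X ⟶ a, f = 0}

/-- `Hom(A, B) = 0`. -/
def homZero (A B : Set C) : Prop := ∀ a ∈ A, ∀ b ∈ B, ∀ f : a ⟶ b, f = 0

/-- The star operation `A ⋆ B`: objects `Y` admitting a distinguished triangle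
`X ⟶ Y ⟶ Z ⟶ ΣX` with `X ∈ A` and `Z ∈ B`. -/
def starSet (A B : Set C) : Set C :=
  {Y | ∃ (X Z : C) (f : X ⟶ Y) (g : Y ⟶ Z) (h : Z ⟶ X⟦(1 : ℤ)⟧),
    Triangle.mk f g h ∈ (distTriang C) ∧ X ∈ A ∧ Z ∈ B}

/-- The (strictly full) shift `Σⁿ A` of a class of objects. -/
def shiftSet (n : ℤ) (A : Set C) : Set C :=
  {X | ∃ a ∈ A, Nonempty (X ≅ (shiftFunctor C n).obj a)}

/-- An object is compact if any map to a coproduct factors through a finite subcoproduct. -/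
def IsCompactObj (X : C) : Prop :=
  ∀ (α : Type v) (f : α → C) (g : X ⟶ ∐ f),
    ∃ (s : Finset α) (h : X ⟶ ∐ (fun i : {a : α // a ∈ s} => f i.1)),
      g = h ≫ Sigma.desc (fun i => Sigma.ι f i.1)

/-- The class of compact objects `T^c`. -/
def compacts : Set C := {X | IsCompactObj C X}

/-- The category is compactly generated. -/
def CompactlyGenerated : Prop :=
  ∀ X : C, (∀ K ∈ compacts C, ∀ f : K ⟶ X, f = 0) → IsZero X

/-- Closure under direct summands (retracts), `smd`. -/
def smd (A : Set C) : Set C :=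
  {X | ∃ Y ∈ A, ∃ (i : X ⟶ Y) (r : Y ⟶ X), i ≫ r = 𝟙 X}

/-- Closure of a class of objects under finite direct sums and extensions (`coprod`). -/
inductive extClosure (U : Set C) : C → Prop
  | of {X : C} : X ∈ U → extClosure U X
  | zero {X : C} : IsZero X → extClosure U X
  | ext {X Y Z : C} (f : X ⟶ Y) (g : Y ⟶ Z) (h : Z ⟶ X⟦(1 : ℤ)⟧) :
      Triangle.mk f g h ∈ (distTriang C) → extClosure U X → extClosure U Z → extClosure U Y

/-- Closure of a class of objects under arbitrary coproducts, extensions and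
direct summands. -/
inductive bigClosure (U : Set C) : C → Prop
  | of {X : C} : X ∈ U → bigClosure U X
  | zero {X : C} : IsZero X → bigClosure U X
  | coprod {α : Type v} (f : α → C) :
      (∀ i, bigClosure U (f i)) → ∀ {X : C}, (X ≅ ∐ f) → bigClosure U X
  | ext {X Y Z : C} (f : X ⟶ Y) (g : Y ⟶ Z) (h : Z ⟶ X⟦(1 : ℤ)⟧) :
      Triangle.mk f g h ∈ (distTriang C) → bigClosure U X → bigClosure U Z → bigClosure U Y
  | retract {X Y : C} (i : X ⟶ Y) (r : Y ⟶ X) :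
      i ≫ r = 𝟙 X → bigClosure U Y → bigClosure U X

/-- Closure of a class of objects under finite direct sums, `add`. -/
def addClosure (U : Set C) : Set C :=
  {X | ∃ (n : ℕ) (f : ULift.{v} (Fin n) → C), (∀ i, f i ∈ U) ∧ Nonempty (X ≅ ∐ f)}

/-- Closure of a class of objects under arbitrary coproducts, `Add`. -/
def bigAddClosure (U : Set C) : Set C :=
  {X | ∃ (α : Type v) (f : α → C), (∀ i, f i ∈ U) ∧ Nonempty (X ≅ ∐ f)}

/-- `coprod_n(U)`. -/
def coprodPow (U : Set C) : ℕ → Set C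
  | 0 => {X | IsZero X}
  | n + 1 => starSet C (addClosure C U) (coprodPow U n)

/-- `Coprod_n(U)`. -/
def coprodPowBig (U : Set C) : ℕ → Set C
  | 0 => {X | IsZero X}
  | n + 1 => starSet C (bigAddClosure C U) (coprodPowBig U n)

/-- `G[a,b] = ∪ { G^m : a ≤ m ≤ b }`. -/
def unionIcc (G : ℤ → Set C) (a b : ℤ) : Set C := ⋃ m ∈ Set.Icc a b, G m

/-- `G(-∞,b] = ∪ { G^m : m ≤ b }`. -/
def unionIic (G : ℤ → Set C) (b : ℤ) : Set C := ⋃ m ∈ Set.Iic b, G m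

/-- `G(-∞,∞) = ∪ { G^m : m ∈ ℤ }`. -/
def unionAll (G : ℤ → Set C) : Set C := ⋃ m : ℤ, G m

/-- `G^{[a,b]} = smd(coprod(G[a,b]))`. -/
def gInt (G : ℤ → Set C) (a b : ℤ) : Set C :=
  smd C {X | extClosure C (unionIcc C G a b) X}

/-- `G^{(-∞,b]} = smd(coprod(G(-∞,b]))`. -/
def gIic (G : ℤ → Set C) (b : ℤ) : Set C :=
  smd C {X | extClosure C (unionIic C G b) X}

/-- `G^{[a,b]}_k = smd(coprod_k(G[a,b]))`. -/
def gIntPow (G : ℤ → Set C) (a b k : ℤ) : Set C :=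
  smd C (coprodPow C (unionIcc C G a b) k.toNat)

/-- `Ḡ^{[a,b]}`. -/
def gBarInt (G : ℤ → Set C) (a b : ℤ) : Set C :=
  {X | bigClosure C (unionIcc C G a b) X}

/-- `Ḡ^{(-∞,b]}`. -/
def gBarIic (G : ℤ → Set C) (b : ℤ) : Set C :=
  {X | bigClosure C (unionIic C G b) X}

/-- `Ḡ^{[a,b]}_k = smd(Coprod_k(G[a,b]))`. -/
def gBarIntPow (G : ℤ → Set C) (a b k : ℤ) : Set C :=
  smd C (coprodPowBig C (unionIcc C G a b) k.toNat)

/-- `M^G_n := G^{(-∞,-n]}`. -/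
def MG (G : ℤ → Set C) (n : ℤ) : Set C := gIic C G (-n)

/-- `R^G_n := ⊥((M^G_n)^⊥)`, orthogonals taken in the whole category. -/
def RG (G : ℤ → Set C) (n : ℤ) : Set C := lOrth C (rOrth C (MG C G n))

/-- A pre-generating sequence. -/
structure IsPreGenSeq (G : ℤ → Set C) : Prop where
  compact : ∀ i : ℤ, G i ⊆ compacts C
  generates : smd C {X | extClosure C (unionAll C G) X} = compacts C

/-- A generating sequence. -/
structure IsGenSeq (G : ℤ → Set C) extends IsPreGenSeq C G : Prop where
  shift_cond : ∀ n : ℤ,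
    shiftSet C (-1) (G n) ∪ G n ∪ shiftSet C 1 (G n) ⊆ gInt C G (n - 1) (n + 1)

/-- A finite generating sequence. -/
structure IsFinGenSeq (G : ℤ → Set C) extends IsGenSeq C G : Prop where
  finite : ∀ i : ℤ, (G i).Finite

/-- ℕ-equivalence of generating sequences. -/
def GenSeqNEquiv (G G' : ℤ → Set C) : Prop :=
  ∃ N : ℤ, 0 ≤ N ∧ (∀ n : ℤ, G' n ⊆ gInt C G (n - N) (n + N)) ∧
    ∀ n : ℤ, G n ⊆ gInt C G' (n - N) (n + N)

/-- ℕ-equivalence of (extended good) metrics. -/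
def MetricNEquiv (M N : ℤ → Set C) : Prop :=
  ∃ n : ℤ, 0 ≤ n ∧ (∀ i : ℤ, M (i + n) ⊆ N i) ∧ ∀ i : ℤ, N (i + n) ⊆ M i

/-- An extended good metric. -/
structure IsExtGoodMetric (M : ℤ → Set C) : Prop where
  zero_mem : ∀ (n : ℤ) (X : C), IsZero X → X ∈ M n
  iso_closed : ∀ (n : ℤ) ⦃X Y : C⦄, (X ≅ Y) → X ∈ M n → Y ∈ M n
  star_subset : ∀ n : ℤ, starSet C (M n) (M n) ⊆ M n
  shift_one : ∀ n : ℤ, shiftSet C 1 (M (n + 1)) ⊆ M n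
  antitone : ∀ n : ℤ, M (n + 1) ⊆ M n
  shift_neg_one : ∀ n : ℤ, shiftSet C (-1) (M (n + 1)) ⊆ M n

/-- An orthogonal metric. -/
structure IsOrthMetric (M : ℤ → Set C) extends IsExtGoodMetric C M : Prop where
  orth : ∀ n : ℤ, lOrth C (rOrth C (M n)) = M n

/-- The closure of the compacts `T̄^c := ∩ₙ T^c ⋆ Rₙ`. -/
def closCompacts (Rm : ℤ → Set C) : Set C := ⋂ n : ℤ, starSet C (compacts C) (Rm n)

/-- `(T, R, A)` is `G`-preapproximable. -/
structure IsGPreApprox (G Rm : ℤ → Set C) (A : ℤ) : Prop where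
  orthMetric : IsOrthMetric C Rm
  A_pos : 0 < A
  cond0 : ∀ i : ℤ, MG C G i ⊆ ⋃ n ∈ {n : ℤ | |n| ≤ A}, shiftSet C n (MG C G (i + 1))
  cond1 : ∀ i : ℤ, MG C G (i + A) ⊆ Rm i ∩ compacts C
  cond2 : ∀ n : ℤ, ∃ N : ℤ, ∀ i : ℤ, N ≤ i → homZero C (G n) (Rm i)

/-- There is a distinguished triangle `E ⟶ F ⟶ D ⟶ ΣE` with `E ∈ S` and `D ∈ D`. -/
def approxTriangle (F : C) (S D : Set C) : Prop :=
  ∃ (E Dd : C) (f : E ⟶ F) (g : F ⟶ Dd) (h : Dd ⟶ E⟦(1 : ℤ)⟧),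
    Triangle.mk f g h ∈ (distTriang C) ∧ E ∈ S ∧ Dd ∈ D

/-- `(T, R, A)` is weakly `G`-approximable. -/
structure IsWeakGApprox (G Rm : ℤ → Set C) (A : ℤ) extends IsGPreApprox C G Rm A : Prop where
  hom_vanish : ∀ n i : ℤ, A ≤ n + i → homZero C (G n) (Rm i)
  approx : ∀ i : ℤ, ∀ F ∈ Rm i,
    approxTriangle C F (gBarInt C G (-A - i) (A - i)) (Rm (i + 1))

/-- `(T, R, A)` is `G`-approximable. -/
structure IsGApprox (G Rm : ℤ → Set C) (A : ℤ) extends IsWeakGApprox C G Rm A : Prop where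
  approx' : ∀ i : ℤ, ∀ F ∈ Rm i,
    approxTriangle C F (gBarIntPow C G (-A - i) (A - i) A) (Rm (i + 1))

/-- `(T, R, A)` is weakly `G`-quasiapproximable. -/
structure IsWeakGQuasiApprox (G Rm : ℤ → Set C) (A : ℤ) extends IsGPreApprox C G Rm A : Prop where
  hom_vanish : ∀ n i : ℤ, A ≤ n + i → homZero C (G n) (Rm i)
  approx : ∀ i : ℤ, ∀ F ∈ Rm i ∩ closCompacts C Rm,
    approxTriangle C F (gBarInt C G (-A - i) (A - i)) (Rm (i + 1) ∩ closCompacts C Rm)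

/-- `(T, R, A)` is `G`-quasiapproximable. -/
structure IsGQuasiApprox (G Rm : ℤ → Set C) (A : ℤ) extends IsWeakGQuasiApprox C G Rm A : Prop where
  approx' : ∀ i : ℤ, ∀ F ∈ Rm i ∩ closCompacts C Rm,
    approxTriangle C F (gBarIntPow C G (-A - i) (A - i) A) (Rm (i + 1) ∩ closCompacts C Rm)

/-- The coproduct of a sequence of objects. -/
noncomputable def seqCoprod (E : ℕ → C) : C := ∐ (fun n : ULift.{v} ℕ => E n.down)

/-- The canonical inclusion into the coproduct of a sequence. -/
noncomputable def seqInj (E : ℕ → C) (n : ℕ) : E n ⟶ seqCoprod C E :=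
  Sigma.ι (fun n : ULift.{v} ℕ => E n.down) (ULift.up n)

/-- The map `1 - shift` on the coproduct of a sequence. -/
noncomputable def oneMinusShift (E : ℕ → C) (e : ∀ n, E n ⟶ E (n + 1)) :
    seqCoprod C E ⟶ seqCoprod C E :=
  Sigma.desc (fun n => seqInj C E n.down - e n.down ≫ seqInj C E (n.down + 1))

/-- `H`, equipped with `π`, `δ`, is a homotopy colimit of the sequence `E`. -/
def IsHocolim (E : ℕ → C) (e : ∀ n, E n ⟶ E (n + 1)) (H : C)
    (π : seqCoprod C E ⟶ H) (δ : H ⟶ (seqCoprod C E)⟦(1 : ℤ)⟧) : Prop :=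
  Triangle.mk (oneMinusShift C E e) π δ ∈ (distTriang C)

/-- A single compact generator. -/
def IsCompactGenerator (G₀ : C) : Prop :=
  IsCompactObj C G₀ ∧ ∀ X : C, (∀ n : ℤ, ∀ f : (shiftFunctor C n).obj G₀ ⟶ X, f = 0) → IsZero X

/-- The strictly full subcategory `{Σʲ G₀}`. -/
def singletonShift (G₀ : C) (j : ℤ) : Set C :=
  {X | Nonempty (X ≅ (shiftFunctor C j).obj G₀)}

/-- The generating sequence `Gⁿ := {Σ⁻ⁿ G₀}`. -/
def genSeqNeg (G₀ : C) (n : ℤ) : Set C := singletonShift C G₀ (-n)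

/-- The generating sequence `Gⁿ := {Σⁿ G₀}`. -/
def genSeqPos (G₀ : C) (n : ℤ) : Set C := singletonShift C G₀ n

/-- The conclusion of STATEMENT 9 for an object `F ∈ R_i` (resp. `F ∈ R_i ∩ T̄^c`): there is a
sequence `E_1 → E_2 → ⋯` with compatible maps to `F`, with `Cone(E_n → F) ∈ R_{i+n}` and
`E_n ∈ Ḡ^{(-∞,A-i]}` for all `n ≥ 1`, the non-canonical map `Hocolim Eₙ → F` is an
isomorphism, and `F ∈ Ḡ^{(-∞,A-i+1]}`. -/
def ApproxSeqConcl (G Rm : ℤ → Set C) (A i : ℤ) (F : C) : Prop :=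
  (∃ (E : ℕ → C) (e : ∀ n, E n ⟶ E (n + 1)) (φ : ∀ n, E n ⟶ F),
    (∀ n, e n ≫ φ (n + 1) = φ n) ∧
    (∀ n : ℕ, E n ∈ gBarIic C G (A - i)) ∧
    (∀ n : ℕ, ∃ (D : C) (g : F ⟶ D) (h : D ⟶ (E n)⟦(1 : ℤ)⟧),
      Triangle.mk (φ n) g h ∈ (distTriang C) ∧ D ∈ Rm (i + (n : ℤ) + 1)) ∧
    ∀ (H : C) (π : seqCoprod C E ⟶ H) (δ : H ⟶ (seqCoprod C E)⟦(1 : ℤ)⟧),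
      IsHocolim C E e H π δ →
      ∀ h : H ⟶ F, (∀ n, seqInj C E n ≫ π ≫ h = φ n) → IsIso h) ∧
  F ∈ gBarIic C G (A - i + 1)


/-! ### Auxiliary lemmas -/

section Aux

set_option linter.unusedSectionVars false

open Preadditive

variable {C}

lemma signTri {X Y Z : C} (f : X ⟶ Y) (g : Y ⟶ Z) (h : Z ⟶ X⟦(1 : ℤ)⟧) (s : ℤˣ)
    (hT : Triangle.mk (s • f) (s • g) h ∈ distTriang C) :
    Triangle.mk f g h ∈ distTriang C := by
  obtain rfl | rfl := Int.units_eq_one_or s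
  · simpa only [one_smul] using hT
  · let e : Y ≅ Y := ⟨-𝟙 Y, -𝟙 Y, by simp, by simp⟩
    refine isomorphic_distinguished _ hT _ (Triangle.isoMk _ _ (Iso.refl X) e (Iso.refl Z) ?_ ?_ ?_)
    · change f ≫ (-𝟙 Y) = 𝟙 X ≫ ((-1 : ℤˣ) • f)
      simp
    · change g ≫ 𝟙 Z = (-𝟙 Y) ≫ ((-1 : ℤˣ) • g)
      simp
    · change h ≫ (𝟙 X)⟦(1 : ℤ)⟧' = 𝟙 Z ≫ h
      simp

lemma shiftTri {X Y Z : C} {f : X ⟶ Y} {g : Y ⟶ Z} {h : Z ⟶ X⟦(1 : ℤ)⟧}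
    (hT : Triangle.mk f g h ∈ distTriang C) (n : ℤ) :
    ∃ h' : Z⟦n⟧ ⟶ X⟦n⟧⟦(1 : ℤ)⟧, Triangle.mk (f⟦n⟧') (g⟦n⟧') h' ∈ distTriang C :=
  ⟨_, signTri _ _ _ n.negOnePow (Triangle.shift_distinguished _ hT n)⟩

lemma exY2 {X Y Z : C} {f : X ⟶ Y} {g : Y ⟶ Z} {h : Z ⟶ X⟦(1 : ℤ)⟧}
    (hT : Triangle.mk f g h ∈ distTriang C) {W : C} (u : Y ⟶ W) (hu : f ≫ u = 0) :
    ∃ v, u = g ≫ v := Triangle.yoneda_exact₂ _ hT u hu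

lemma exY3 {X Y Z : C} {f : X ⟶ Y} {g : Y ⟶ Z} {h : Z ⟶ X⟦(1 : ℤ)⟧}
    (hT : Triangle.mk f g h ∈ distTriang C) {W : C} (u : Z ⟶ W) (hu : g ≫ u = 0) :
    ∃ v, u = h ≫ v := Triangle.yoneda_exact₃ _ hT u hu

lemma exY1 {X Y Z : C} {f : X ⟶ Y} {g : Y ⟶ Z} {h : Z ⟶ X⟦(1 : ℤ)⟧}
    (hT : Triangle.mk f g h ∈ distTriang C) {W : C} (u : X⟦(1 : ℤ)⟧ ⟶ W) (hu : h ≫ u = 0) :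
    ∃ v, u = f⟦(1 : ℤ)⟧' ≫ v := by
  obtain ⟨v, hv⟩ : ∃ v : Y⟦(1 : ℤ)⟧ ⟶ W, u = (-f⟦(1 : ℤ)⟧') ≫ v :=
    Triangle.yoneda_exact₃ _ (rot_of_distTriang _ hT) u hu
  exact ⟨-v, by rw [hv]; simp⟩

lemma z12 {X Y Z : C} {f : X ⟶ Y} {g : Y ⟶ Z} {h : Z ⟶ X⟦(1 : ℤ)⟧}
    (hT : Triangle.mk f g h ∈ distTriang C) : f ≫ g = 0 := comp_distTriang_mor_zero₁₂ _ hT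

lemma z23 {X Y Z : C} {f : X ⟶ Y} {g : Y ⟶ Z} {h : Z ⟶ X⟦(1 : ℤ)⟧}
    (hT : Triangle.mk f g h ∈ distTriang C) : g ≫ h = 0 := comp_distTriang_mor_zero₂₃ _ hT

lemma z31 {X Y Z : C} {f : X ⟶ Y} {g : Y ⟶ Z} {h : Z ⟶ X⟦(1 : ℤ)⟧}
    (hT : Triangle.mk f g h ∈ distTriang C) : h ≫ f⟦(1 : ℤ)⟧' = 0 :=
  comp_distTriang_mor_zero₃₁ _ hT

/-- A map is good with respect to `W` if its cone is left orthogonal to `W`. -/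
def Gd (W : Set C) {Y Z : C} (f : Y ⟶ Z) : Prop :=
  (∀ X ∈ W, ∀ u : Z ⟶ X, f ≫ u = 0 → u = 0) ∧
  ∀ X ∈ W, ∀ v : Y⟦(1 : ℤ)⟧ ⟶ X, ∃ u : Z⟦(1 : ℤ)⟧ ⟶ X, f⟦(1 : ℤ)⟧' ≫ u = v

lemma Gd_iff (W : Set C) {X Y Z : C} {f : X ⟶ Y} {g : Y ⟶ Z} {h : Z ⟶ X⟦(1 : ℤ)⟧}
    (hT : Triangle.mk f g h ∈ distTriang C) : Z ∈ lOrth C W ↔ Gd W f := by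
  constructor
  · intro hZ
    refine ⟨fun V hV u hu => ?_, fun V hV v => ?_⟩
    · obtain ⟨w, rfl⟩ := exY2 hT u hu
      rw [hZ V hV w, comp_zero]
    · obtain ⟨u, hu⟩ := exY1 hT v (hZ V hV _)
      exact ⟨u, hu.symm⟩
  · rintro ⟨h1, h2⟩ V hV w
    have : g ≫ w = 0 := h1 V hV _ (by rw [← Category.assoc, z12 hT, zero_comp])
    obtain ⟨v, rfl⟩ := exY3 hT w this
    obtain ⟨u, rfl⟩ := h2 V hV v
    rw [← Category.assoc, z31 hT, zero_comp]

lemma Gd_mid (W : Set C) {X Y Z X' Y' Z' : C} {f : X ⟶ Y} {g : Y ⟶ Z} {h : Z ⟶ X⟦(1 : ℤ)⟧}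
    (hT : Triangle.mk f g h ∈ distTriang C)
    {f' : X' ⟶ Y'} {g' : Y' ⟶ Z'} {h' : Z' ⟶ X'⟦(1 : ℤ)⟧}
    (hT' : Triangle.mk f' g' h' ∈ distTriang C)
    (a : X ⟶ X') (b : Y ⟶ Y') (c : Z ⟶ Z') (h1 : f ≫ b = a ≫ f') (h2 : g ≫ c = b ≫ g')
    (h3 : h ≫ a⟦(1 : ℤ)⟧' = c ≫ h') (ha : Gd W a) (hc : Gd W c) : Gd W b := by
  refine ⟨fun V hV u hu => ?_, fun V hV v => ?_⟩
  · have e1 : f' ≫ u = 0 := ha.1 V hV _ (by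
      rw [← Category.assoc, ← h1, Category.assoc, hu, comp_zero])
    obtain ⟨w, rfl⟩ := exY2 hT' u e1
    obtain ⟨t, ht⟩ := exY3 hT (c ≫ w) (by
      rw [← Category.assoc, h2, Category.assoc, hu])
    obtain ⟨t', rfl⟩ := ha.2 V hV t
    have e2 : w - h' ≫ t' = 0 := hc.1 V hV _ (by
      rw [comp_sub, ht, ← Category.assoc, h3, Category.assoc, sub_self])
    rw [sub_eq_zero.1 e2, ← Category.assoc, z23 hT', zero_comp]
  · obtain ⟨s, hs⟩ := ha.2 V hV (f⟦(1 : ℤ)⟧' ≫ v)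
    have e1 : h' ≫ s = 0 := hc.1 V hV _ (by
      rw [← Category.assoc, ← h3, Category.assoc, hs, ← Category.assoc, z31 hT, zero_comp])
    obtain ⟨w, rfl⟩ := exY1 hT' s e1
    obtain ⟨k, hk⟩ := shiftTri hT 1
    obtain ⟨t, ht⟩ := exY2 hk (v - b⟦(1 : ℤ)⟧' ≫ w) (by
      rw [comp_sub, ← hs, ← Category.assoc, ← Category.assoc, ← Functor.map_comp,
        ← Functor.map_comp, h1, sub_self])
    obtain ⟨t', rfl⟩ := hc.2 V hV t
    refine ⟨w + g'⟦(1 : ℤ)⟧' ≫ t', ?_⟩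
    rw [comp_add, ← Category.assoc, ← Functor.map_comp (f := b), ← h2, Functor.map_comp,
      Category.assoc, ← ht]
    abel

lemma Gd_id (W : Set C) (X : C) : Gd W (𝟙 X) :=
  ⟨fun V _ u hu => by simpa using hu, fun V _ v => ⟨v, by simp⟩⟩

open Classical in
/-- Idempotent projecting onto a finite subcoproduct. -/
noncomputable def qs {α : Type v} (f : α → C) (s : Finset α) : ∐ f ⟶ ∐ f :=
  Sigma.desc (fun j => if j ∈ s then Sigma.ι f j else 0)

open Classical in
lemma ι_qs {α : Type v} (f : α → C) (s : Finset α) (j : α) :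
    Sigma.ι f j ≫ qs f s = if j ∈ s then Sigma.ι f j else 0 := by
  simp [qs]

lemma qs_comp {α : Type v} (f : α → C) {s t : Finset α} (h : s ⊆ t) :
    qs f s ≫ qs f t = qs f s := by
  apply Sigma.hom_ext
  intro j
  rw [← Category.assoc, ι_qs]
  split_ifs with hj
  · rw [ι_qs, if_pos (h hj)]
  · simp

lemma compact_iff (K : C) : K ∈ compacts C ↔
    ∀ (α : Type v) (f : α → C) (y : K ⟶ ∐ f), ∃ s, y ≫ qs f s = y := by
  constructor
  · intro hK α f y
    obtain ⟨s, h, rfl⟩ := hK α f y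
    refine ⟨s, ?_⟩
    rw [Category.assoc]
    congr 1
    apply Sigma.hom_ext
    intro j
    simp [ι_qs]
  · intro H α f y
    classical
    obtain ⟨s, hs⟩ := H α f y
    refine ⟨s, y ≫ Sigma.desc (fun j => if h : j ∈ s then
      Sigma.ι (fun i : {a : α // a ∈ s} => f i.1) ⟨j, h⟩ else 0), ?_⟩
    rw [Category.assoc]
    conv_lhs => rw [← hs]
    congr 1
    apply Sigma.hom_ext
    intro j
    rw [ι_qs]
    by_cases hj : j ∈ s <;> simp [hj]

lemma compact_shift_q {K : C} (hK : K ∈ compacts C) (n : ℤ) {α : Type v} (f : α → C)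
    (u : K ⟶ (∐ f)⟦n⟧) : ∃ s, u ≫ (qs f s)⟦n⟧' = u := by
  obtain ⟨s, hs⟩ := (compact_iff K).1 hK α (fun i => (f i)⟦n⟧)
    (u ≫ inv (sigmaComparison (shiftFunctor C n) f))
  refine ⟨s, ?_⟩
  have key : qs (fun i => (f i)⟦n⟧) s ≫ sigmaComparison (shiftFunctor C n) f =
      sigmaComparison (shiftFunctor C n) f ≫ (qs f s)⟦n⟧' := by
    apply Sigma.hom_ext
    intro j
    rw [← Category.assoc, ι_qs, ι_comp_sigmaComparison_assoc, ← Functor.map_comp, ι_qs]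
    split_ifs
    · simp
    · simp
  calc u ≫ (qs f s)⟦n⟧' = (u ≫ inv (sigmaComparison (shiftFunctor C n) f)) ≫
        sigmaComparison (shiftFunctor C n) f ≫ (qs f s)⟦n⟧' := by simp
    _ = u := by
      rw [← key, ← Category.assoc, hs]; simp

lemma compact_shift {K : C} (hK : K ∈ compacts C) (n : ℤ) : K⟦n⟧ ∈ compacts C := by
  rw [compact_iff]
  intro α f y
  let e := (shiftEquiv C n).toAdjunction
  obtain ⟨s, hs⟩ := compact_shift_q hK (-n) f (e.homEquiv K _ y)
  refine ⟨s, (e.homEquiv K _).injective ?_⟩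
  erw [Adjunction.homEquiv_naturality_right]
  exact hs

lemma compact_ext {X Y Z : C} {f : X ⟶ Y} {g : Y ⟶ Z} {h : Z ⟶ X⟦(1 : ℤ)⟧}
    (hT : Triangle.mk f g h ∈ distTriang C) (hX : X ∈ compacts C) (hZ : Z ∈ compacts C) :
    Y ∈ compacts C := by
  classical
  rw [compact_iff] at *
  intro α F y
  obtain ⟨s, hs⟩ := hX α F (f ≫ y)
  obtain ⟨z, hz⟩ := exY2 hT (y - y ≫ qs F s) (by
    rw [comp_sub, ← Category.assoc, hs, sub_self])
  obtain ⟨t, ht⟩ := hZ α F z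
  refine ⟨s ∪ t, ?_⟩
  have h1 : z ≫ qs F (s ∪ t) = z := by
    conv_lhs => rw [← ht]
    rw [Category.assoc, qs_comp F Finset.subset_union_right, ht]
  have h2 : y = y ≫ qs F s + g ≫ z := by rw [← hz]; abel
  conv_lhs => rw [h2]
  rw [add_comp, Category.assoc, Category.assoc, qs_comp F Finset.subset_union_left, h1, ← h2]

lemma metric_anti {M : ℤ → Set C} (hM : IsExtGoodMetric C M) {m n : ℤ} (h : m ≤ n) :
    M n ⊆ M m := by
  have : Antitone M := antitone_int_of_succ_le hM.antitone
  exact this h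

lemma compact_vanish {G Rm : ℤ → Set C} {A : ℤ} (hG : IsGenSeq C G)
    (hP : IsGPreApprox C G Rm A) {K : C} (hK : K ∈ compacts C) :
    ∃ N : ℤ, ∀ j, N ≤ j → ∀ r ∈ Rm j, ∀ f : K ⟶ r, f = 0 := by
  rw [← hG.generates] at hK
  obtain ⟨Y, hY, i, r, hir⟩ := hK
  have key : ∃ N : ℤ, ∀ j, N ≤ j → ∀ r ∈ Rm j, ∀ f : Y ⟶ r, f = 0 := by
    clear hir
    replace hY : extClosure C (unionAll C G) Y := hY
    clear i r
    induction hY with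
    | of h =>
      obtain ⟨n, hn⟩ := Set.mem_iUnion.1 h
      obtain ⟨N, hN⟩ := hP.cond2 n
      exact ⟨N, fun j hj r hr f => hN j hj _ hn r hr f⟩
    | zero h => exact ⟨0, fun j _ r _ f => h.eq_of_src _ _⟩
    | ext f g h hT _ _ ih1 ih2 =>
      obtain ⟨N1, h1⟩ := ih1
      obtain ⟨N2, h2⟩ := ih2
      refine ⟨max N1 N2, fun j hj r hr u => ?_⟩
      obtain ⟨v, rfl⟩ := exY2 hT u (h1 j (le_trans (le_max_left _ _) hj) r hr _)
      rw [h2 j (le_trans (le_max_right _ _) hj) r hr v, comp_zero]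
  obtain ⟨N, hN⟩ := key
  refine ⟨N, fun j hj x hx f => ?_⟩
  have : f = i ≫ (r ≫ f) := by rw [← Category.assoc, hir, Category.id_comp]
  rw [this, hN j hj x hx (r ≫ f), comp_zero]

lemma shift_mem {M : ℤ → Set C} (hM : IsExtGoodMetric C M) {n : ℤ} {X : C} (hX : X ∈ M (n + 1)) :
    X⟦(1 : ℤ)⟧ ∈ M n ∧ X⟦(-1 : ℤ)⟧ ∈ M n :=
  ⟨hM.shift_one n ⟨X, hX, ⟨Iso.refl _⟩⟩, hM.shift_neg_one n ⟨X, hX, ⟨Iso.refl _⟩⟩⟩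

/-- Closure properties used of a class of objects. -/
structure StabClass (S : Set C) : Prop where
  mid : ∀ {X Y Z : C} {f : X ⟶ Y} {g : Y ⟶ Z} {h : Z ⟶ X⟦(1 : ℤ)⟧},
    Triangle.mk f g h ∈ distTriang C → X ∈ S → Z ∈ S → Y ∈ S
  shp : ∀ {X : C}, X ∈ S → X⟦(1 : ℤ)⟧ ∈ S
  shm : ∀ {X : C}, X ∈ S → X⟦(-1 : ℤ)⟧ ∈ S

lemma StabClass.fib {S : Set C} (hS : StabClass S) {X Y Z : C} {f : X ⟶ Y} {g : Y ⟶ Z}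
    {h : Z ⟶ X⟦(1 : ℤ)⟧} (hT : Triangle.mk f g h ∈ distTriang C) (hY : Y ∈ S) (hZ : Z ∈ S) :
    X ∈ S :=
  hS.mid (inv_rot_of_distTriang _ hT) (hS.shm hZ) hY

lemma StabClass.cone {S : Set C} (hS : StabClass S) {X Y Z : C} {f : X ⟶ Y} {g : Y ⟶ Z}
    {h : Z ⟶ X⟦(1 : ℤ)⟧} (hT : Triangle.mk f g h ∈ distTriang C) (hX : X ∈ S) (hY : Y ∈ S) :
    Z ∈ S :=
  hS.mid (rot_of_distTriang _ hT) hY (hS.shp hX)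

lemma stab_univ : StabClass (Set.univ : Set C) :=
  ⟨fun _ _ _ => trivial, fun _ => trivial, fun _ => trivial⟩

lemma stab_clos {G Rm : ℤ → Set C} {A : ℤ} (hG : IsGenSeq C G)
    (hP : IsGPreApprox C G Rm A) : StabClass (closCompacts C Rm) where
  shp := by
    intro X hX
    refine Set.mem_iInter.2 fun n => ?_
    obtain ⟨K, r, f, g, h, hT, hK, hr⟩ := Set.mem_iInter.1 hX (n + 1)
    obtain ⟨h', hT'⟩ := shiftTri hT 1
    exact ⟨_, _, _, _, _, hT', compact_shift hK 1, (shift_mem hP.orthMetric.1 hr).1⟩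
  shm := by
    intro X hX
    refine Set.mem_iInter.2 fun n => ?_
    obtain ⟨K, r, f, g, h, hT, hK, hr⟩ := Set.mem_iInter.1 hX (n + 1)
    obtain ⟨h', hT'⟩ := shiftTri hT (-1)
    exact ⟨_, _, _, _, _, hT', compact_shift hK (-1), (shift_mem hP.orthMetric.1 hr).2⟩
  mid := by
    intro X Y Z f g h hT hX hZ
    refine Set.mem_iInter.2 fun n => ?_
    obtain ⟨KZ, rZ, c, cg, ch, hTZ, hKZ, hrZ⟩ := Set.mem_iInter.1 hZ n
    obtain ⟨N, hN⟩ := compact_vanish hG hP hKZ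
    obtain ⟨KX, rX, a, ag, ah, hTX, hKX, hrX⟩ := Set.mem_iInter.1 hX (max N n + 1)
    have hM := hP.orthMetric.1
    obtain ⟨ah', hTX'⟩ := shiftTri hTX 1
    obtain ⟨k, hk⟩ : ∃ k : KZ ⟶ KX⟦(1 : ℤ)⟧, c ≫ h = k ≫ a⟦(1 : ℤ)⟧' :=
      Triangle.coyoneda_exact₂ _ hTX' (c ≫ h)
        (hN (max N n) (le_max_left _ _) _ (shift_mem hM hrX).1 _)
    obtain ⟨KY, p, q, hTK⟩ := distinguished_cocone_triangle₂ k
    obtain ⟨b, hb1, hb2⟩ := complete_distinguished_triangle_morphism₂ _ _ hTK hT a c hk.symm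
    obtain ⟨D, bg, bh, hTb⟩ := distinguished_cocone_triangle b
    refine ⟨KY, D, b, bg, bh, hTb, compact_ext hTK hKX hKZ, ?_⟩
    rw [← hP.orthMetric.orth n] at hrZ ⊢
    have hrX' : rX ∈ Rm n := metric_anti hM (by have := le_max_right N n; omega) hrX
    rw [← hP.orthMetric.orth n] at hrX'
    exact (Gd_iff _ hTb).2 (Gd_mid _ hTK hT a b c hb1 hb2 hk.symm
      ((Gd_iff _ hTX).1 hrX') ((Gd_iff _ hTZ).1 hrZ))

lemma bigClosure_mono {U V : Set C} (h : U ⊆ V) {X : C} (hX : bigClosure C U X) :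
    bigClosure C V X := by
  induction hX with
  | of hx => exact .of (h hx)
  | zero hx => exact .zero hx
  | coprod f _ e ih => exact .coprod f ih e
  | ext f g h hT _ _ ih1 ih2 => exact .ext f g h hT ih1 ih2
  | retract i r hir _ ih => exact .retract i r hir ih

lemma gBarInt_sub (G : ℤ → Set C) {a b c : ℤ} (h : b ≤ c) : gBarInt C G a b ⊆ gBarIic C G c := by
  intro X hX
  refine bigClosure_mono ?_ hX
  exact Set.biUnion_subset_biUnion_left (fun m hm => le_trans hm.2 h)

lemma gBarIic_mono (G : ℤ → Set C) {b c : ℤ} (h : b ≤ c) : gBarIic C G b ⊆ gBarIic C G c := by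
  intro X hX
  refine bigClosure_mono ?_ hX
  exact Set.biUnion_subset_biUnion_left (fun m hm => le_trans hm h)

lemma ext_big {U : Set C} {X : C} (hX : extClosure C U X) : bigClosure C U X := by
  induction hX with
  | of hx => exact .of hx
  | zero hx => exact .zero hx
  | ext f g h hT _ _ ih1 ih2 => exact .ext f g h hT ih1 ih2

lemma gBar_shift {G : ℤ → Set C} (hG : IsGenSeq C G) {b : ℤ} {X : C}
    (hX : X ∈ gBarIic C G b) : X⟦(1 : ℤ)⟧ ∈ gBarIic C G (b + 1) := by
  replace hX : bigClosure C (unionIic C G b) X := hX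
  change bigClosure C (unionIic C G (b + 1)) _
  induction hX with
  | @of X hx =>
    obtain ⟨m, hm, hx⟩ := Set.mem_iUnion₂.1 hx
    obtain ⟨Y, hY, i, r, hir⟩ := hG.shift_cond m (Or.inr ⟨X, hx, ⟨Iso.refl _⟩⟩)
    refine .retract i r hir (gBarInt_sub G (a := m - 1) (b := m + 1) ?_ (ext_big hY))
    have : m ≤ b := hm
    omega
  | zero hx => exact .zero ((shiftFunctor C (1 : ℤ)).map_isZero hx)
  | coprod f _ e ih =>
    exact .coprod _ ih ((shiftFunctor C (1 : ℤ)).mapIso e ≪≫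
      (asIso (sigmaComparison (shiftFunctor C (1 : ℤ)) f)).symm)
  | ext f g h hT _ _ ih1 ih2 =>
    obtain ⟨h', hT'⟩ := shiftTri hT 1
    exact .ext _ _ _ hT' ih1 ih2
  | retract i r hir _ ih =>
    exact .retract (i⟦(1 : ℤ)⟧') (r⟦(1 : ℤ)⟧') (by rw [← Functor.map_comp, hir, CategoryTheory.Functor.map_id]) ih

/-- One step of the construction. -/
lemma step {G Rm : ℤ → Set C} {A : ℤ} (hM : IsOrthMetric C Rm) {S : Set C} (hS : StabClass S)
    (happ : ∀ i : ℤ, ∀ F ∈ Rm i ∩ S,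
      approxTriangle C F (gBarInt C G (-A - i) (A - i)) (Rm (i + 1) ∩ S))
    {F : C} (hF : F ∈ S) {b j : ℤ} (hb : A - j ≤ b) {E : C} (φ : E ⟶ F)
    (hE : E ∈ gBarIic C G b)
    (hφ : ∃ (D : C) (g : F ⟶ D) (h : D ⟶ E⟦(1 : ℤ)⟧),
      Triangle.mk φ g h ∈ distTriang C ∧ D ∈ Rm j ∩ S) :
    ∃ (E' : C) (φ' : E' ⟶ F) (e : E ⟶ E'), e ≫ φ' = φ ∧ E' ∈ gBarIic C G b ∧
      ∃ (D : C) (g : F ⟶ D) (h : D ⟶ E'⟦(1 : ℤ)⟧),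
        Triangle.mk φ' g h ∈ distTriang C ∧ D ∈ Rm (j + 1) ∩ S := by
  obtain ⟨D, g, h, hT, hD⟩ := hφ
  obtain ⟨E1, D1, k, kg, kh, hT1, hE1, hD1⟩ := happ j D hD
  obtain ⟨E', e, q, hT2⟩ := distinguished_cocone_triangle₂ (k ≫ h)
  have h3 : (k ≫ h) ≫ (𝟙 E)⟦(1 : ℤ)⟧' = k ≫ h := by simp
  obtain ⟨φ', h1, h2⟩ : ∃ φ' : E' ⟶ F, e ≫ φ' = 𝟙 E ≫ φ ∧ q ≫ k = φ' ≫ g :=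
    complete_distinguished_triangle_morphism₂ _ _ hT2 hT (𝟙 E) k h3
  obtain ⟨D', g', h', hT'⟩ := distinguished_cocone_triangle φ'
  have hE1S : E1 ∈ S := hS.fib hT1 hD.2 hD1.2
  have hES : E ∈ S := hS.fib hT hF hD.2
  refine ⟨E', φ', e, ?_, .ext _ _ _ hT2 hE (gBarInt_sub G hb hE1), D', g', h', hT', ?_,
    hS.cone hT' (hS.mid hT2 hES hE1S) hF⟩
  · rw [h1, Category.id_comp]
  · have hd := hD1.1
    rw [← hM.orth] at hd ⊢
    exact (Gd_iff _ hT').2 (Gd_mid _ hT2 hT (𝟙 E) φ' k h1 h2 h3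
      (Gd_id _ _) ((Gd_iff _ hT1).1 hd))

lemma seq_stable {G Rm : ℤ → Set C} {A : ℤ} (hG : IsGenSeq C G) (hP : IsGPreApprox C G Rm A)
    {i : ℤ} {F : C} {E : ℕ → C} (φ : ∀ n, E n ⟶ F)
    (htri : ∀ n : ℕ, ∃ (D : C) (g : F ⟶ D) (h : D ⟶ (E n)⟦(1 : ℤ)⟧),
      Triangle.mk (φ n) g h ∈ (distTriang C) ∧ D ∈ Rm (i + (n : ℤ) + 1))
    {K : C} (hK : K ∈ compacts C) :
    ∃ M₀ : ℕ, ∀ M, M₀ ≤ M → (∀ u : K ⟶ F, ∃ z : K ⟶ E M, z ≫ φ M = u) ∧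
      ∀ z : K ⟶ E M, z ≫ φ M = 0 → z = 0 := by
  obtain ⟨N, hN⟩ := compact_vanish hG hP hK
  refine ⟨(N - i).toNat, fun M hM => ?_⟩
  obtain ⟨D, g, h, hT, hD⟩ := htri M
  constructor
  · intro u
    obtain ⟨z, hz⟩ : ∃ z : K ⟶ E M, u = z ≫ φ M :=
      Triangle.coyoneda_exact₂ _ hT u (hN _ (by omega) D hD _)
    exact ⟨z, hz.symm⟩
  · intro z hz
    obtain ⟨w, hw⟩ := Triangle.coyoneda_exact₂ _ (inv_rot_of_distTriang _ hT) z hz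
    have : w = 0 := hN (i + M) (by omega) _ (shift_mem hP.orthMetric.1 hD).2 w
    rw [hw, this]
    exact zero_comp

lemma seqInj_oneMinusShift (E : ℕ → C) (e : ∀ n, E n ⟶ E (n + 1)) (n : ℕ) :
    seqInj C E n ≫ oneMinusShift C E e = seqInj C E n - e n ≫ seqInj C E (n + 1) := by
  exact Sigma.ι_desc _ _

lemma seq_hom_ext {E : ℕ → C} {X : C} {a b : seqCoprod C E ⟶ X}
    (h : ∀ n, seqInj C E n ≫ a = seqInj C E n ≫ b) : a = b :=
  Sigma.hom_ext _ _ (fun n => h n.down)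

/-- Map out of the coproduct of a sequence. -/
noncomputable def seqDesc {E : ℕ → C} {X : C} (a : ∀ n, E n ⟶ X) : seqCoprod C E ⟶ X :=
  Sigma.desc (fun n => a n.down)

lemma seqInj_desc {E : ℕ → C} {X : C} (a : ∀ n, E n ⟶ X) (n : ℕ) :
    seqInj C E n ≫ seqDesc a = a n := by
  exact Sigma.ι_desc _ _

/-- Projection from the coproduct of a sequence. -/
noncomputable def seqProj (E : ℕ → C) (n : ℕ) : seqCoprod C E ⟶ E n :=
  seqDesc (fun m => if h : m = n then eqToHom (by rw [h]) else 0)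

lemma seqInj_proj_self (E : ℕ → C) (n : ℕ) : seqInj C E n ≫ seqProj E n = 𝟙 _ := by
  simp [seqProj, seqInj_desc]

lemma seqInj_proj_ne (E : ℕ → C) {m n : ℕ} (h : m ≠ n) : seqInj C E m ≫ seqProj E n = 0 := by
  simp [seqProj, seqInj_desc, h]

lemma oms_proj_zero (E : ℕ → C) (e : ∀ n, E n ⟶ E (n + 1)) :
    oneMinusShift C E e ≫ seqProj E 0 = seqProj E 0 := by
  apply seq_hom_ext
  intro n
  rw [← Category.assoc, seqInj_oneMinusShift, sub_comp, Category.assoc,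
    seqInj_proj_ne E (Nat.succ_ne_zero n), comp_zero, sub_zero]

lemma oms_proj_succ (E : ℕ → C) (e : ∀ n, E n ⟶ E (n + 1)) (k : ℕ) :
    oneMinusShift C E e ≫ seqProj E (k + 1) = seqProj E (k + 1) - seqProj E k ≫ e k := by
  apply seq_hom_ext
  intro n
  rw [← Category.assoc, seqInj_oneMinusShift, sub_comp, comp_sub, Category.assoc]
  congr 1
  by_cases h : n = k
  · subst h
    rw [seqInj_proj_self, ← Category.assoc, seqInj_proj_self, Category.comp_id, Category.id_comp]
  · rw [seqInj_proj_ne E (by omega), ← Category.assoc, seqInj_proj_ne E h, comp_zero, zero_comp]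

/-- The idempotent `qs` for a sequence. -/
noncomputable def seqQ (E : ℕ → C) (s : Finset (ULift.{v} ℕ)) : seqCoprod C E ⟶ seqCoprod C E :=
  qs (fun n : ULift.{v} ℕ => E n.down) s

open Classical in
lemma seqInj_seqQ (E : ℕ → C) (s : Finset (ULift.{v} ℕ)) (j : ULift.{v} ℕ) :
    seqInj C E j.down ≫ seqQ E s = if j ∈ s then seqInj C E j.down else 0 := by
  have h := ι_qs (fun n : ULift.{v} ℕ => E n.down) s j
  by_cases hj : j ∈ s
  · rw [if_pos hj] at h ⊢
    exact h
  · rw [if_neg hj] at h ⊢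
    exact h

lemma qs_eq_sum (E : ℕ → C) (s : Finset (ULift.{v} ℕ)) :
    seqQ E s = ∑ j ∈ s, seqProj E j.down ≫ seqInj C E j.down := by
  apply seq_hom_ext
  intro n
  obtain ⟨j, rfl⟩ : ∃ j : ULift.{v} ℕ, j.down = n := ⟨⟨n⟩, rfl⟩
  rw [seqInj_seqQ, comp_sum]
  have : ∀ k ∈ s, k ≠ j → seqInj C E j.down ≫ seqProj E k.down ≫ seqInj C E k.down = 0 := by
    intro k _ hkj
    rw [← Category.assoc, seqInj_proj_ne E (fun h => hkj (ULift.ext _ _ h.symm)), zero_comp]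
  split_ifs with hj
  · rw [Finset.sum_eq_single_of_mem j hj this, ← Category.assoc, seqInj_proj_self,
      Category.id_comp]
  · exact (Finset.sum_eq_zero fun k hk => this k hk (fun h => hj (h ▸ hk))).symm

/-- Maps from a compact object to the shifted coproduct killed by `1 - shift` vanish. -/
lemma oms_inj {E : ℕ → C} {e : ∀ n, E n ⟶ E (n + 1)} {K : C} (hK : K ∈ compacts C)
    (u : K ⟶ (seqCoprod C E)⟦(1 : ℤ)⟧) (hu : u ≫ (oneMinusShift C E e)⟦(1 : ℤ)⟧' = 0) :
    u = 0 := by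
  have hp : ∀ n, u ≫ (seqProj E n)⟦(1 : ℤ)⟧' = 0 := by
    intro n
    induction n with
    | zero =>
      rw [← oms_proj_zero E e, Functor.map_comp, ← Category.assoc, hu, zero_comp]
    | succ k ih =>
      have h1 := congrArg (fun x => u ≫ x⟦(1 : ℤ)⟧') (oms_proj_succ E e k)
      simp only [Functor.map_comp, Functor.map_sub, comp_sub] at h1
      rw [← Category.assoc, hu, zero_comp, ← Category.assoc u, ih, zero_comp, sub_zero] at h1
      exact h1.symm
  obtain ⟨s, hs⟩ : ∃ s, u ≫ (seqQ E s)⟦(1 : ℤ)⟧' = u := compact_shift_q hK 1 (fun n : ULift.{v} ℕ => E n.down) u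
  rw [← hs, qs_eq_sum, Functor.map_sum, comp_sum]
  refine Finset.sum_eq_zero fun j _ => ?_
  rw [Functor.map_comp, ← Category.assoc, hp, zero_comp]

lemma oms_trans {E : ℕ → C} {e : ∀ n, E n ⟶ E (n + 1)} {H : C} {π : seqCoprod C E ⟶ H}
    (hπ : oneMinusShift C E e ≫ π = 0) {n M : ℕ} (h : n ≤ M) :
    ∃ t : E n ⟶ E M, seqInj C E n ≫ π = t ≫ seqInj C E M ≫ π := by
  induction M, h using Nat.le_induction with
  | base => exact ⟨𝟙 _, by simp⟩
  | succ M _ ih =>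
    obtain ⟨t, ht⟩ := ih
    refine ⟨t ≫ e M, ?_⟩
    have h1 : seqInj C E M ≫ oneMinusShift C E e ≫ π = 0 := by rw [hπ, comp_zero]
    rw [← Category.assoc, seqInj_oneMinusShift, sub_comp, sub_eq_zero] at h1
    rw [ht, h1]
    simp

lemma hocolim_factor {E : ℕ → C} {e : ∀ n, E n ⟶ E (n + 1)} {H : C} {π : seqCoprod C E ⟶ H}
    {δ : H ⟶ (seqCoprod C E)⟦(1 : ℤ)⟧} (hH : IsHocolim C E e H π δ) {K : C}
    (hK : K ∈ compacts C) (x : K ⟶ H) :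
    ∃ N : ℕ, ∀ M, N ≤ M → ∃ z : K ⟶ E M, x = z ≫ seqInj C E M ≫ π := by
  have hT : Triangle.mk (oneMinusShift C E e) π δ ∈ distTriang C := hH
  have hδ : x ≫ δ = 0 := oms_inj (e := e) hK _ (by
    rw [Category.assoc, z31 hT, comp_zero])
  obtain ⟨y, hy⟩ : ∃ y : K ⟶ seqCoprod C E, x = y ≫ π := Triangle.coyoneda_exact₃ _ hT x hδ
  obtain ⟨s, hs⟩ : ∃ s, y ≫ seqQ E s = y := (compact_iff K).1 hK _ (fun n : ULift.{v} ℕ => E n.down) y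
  refine ⟨s.sup (fun j => j.down), fun M hM => ?_⟩
  have ht : ∀ j ∈ s, ∃ t : E j.down ⟶ E M, seqInj C E j.down ≫ π = t ≫ seqInj C E M ≫ π :=
    fun j hj => oms_trans (z12 hT) (le_trans (Finset.le_sup (f := fun j => j.down) hj) hM)
  choose! t ht using ht
  refine ⟨∑ j ∈ s, y ≫ seqProj E j.down ≫ t j, ?_⟩
  rw [hy]
  conv_lhs => rw [← hs, qs_eq_sum, comp_sum, sum_comp]
  rw [sum_comp]
  refine Finset.sum_congr rfl fun j hj => ?_
  simp only [Category.assoc]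
  rw [ht j hj]

lemma adj_zero {L R : C ⥤ C} (adj : L ⊣ R) {K H F : C}
    (u : K ⟶ R.obj H) (h : H ⟶ F) (hu : u ≫ R.map h = 0)
    (inj : ∀ x : L.obj K ⟶ H, x ≫ h = 0 → x = 0) : u = 0 := by
  have : R.PreservesZeroMorphisms := by
    have := adj.isRightAdjoint
    infer_instance
  have hx : (adj.homEquiv K H).symm u ≫ h = 0 := by
    apply (adj.homEquiv K F).injective
    rw [Adjunction.homEquiv_naturality_right, Equiv.apply_symm_apply, hu,
      Adjunction.homEquiv_unit]
    simp
  have h2 := (adj.homEquiv K H).apply_symm_apply u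
  rw [inj _ hx, Adjunction.homEquiv_unit] at h2
  simpa using h2.symm

lemma hocolim_iso {G Rm : ℤ → Set C} {A : ℤ} (hcg : CompactlyGenerated C) (hG : IsGenSeq C G)
    (hP : IsGPreApprox C G Rm A)
    {i : ℤ} {F : C} {E : ℕ → C} {e : ∀ n, E n ⟶ E (n + 1)} (φ : ∀ n, E n ⟶ F)
    (htri : ∀ n : ℕ, ∃ (D : C) (g : F ⟶ D) (h : D ⟶ (E n)⟦(1 : ℤ)⟧),
      Triangle.mk (φ n) g h ∈ (distTriang C) ∧ D ∈ Rm (i + (n : ℤ) + 1))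
    {H : C} {π : seqCoprod C E ⟶ H}
    {δ : H ⟶ (seqCoprod C E)⟦(1 : ℤ)⟧} (hH : IsHocolim C E e H π δ)
    (h : H ⟶ F) (hh : ∀ n, seqInj C E n ≫ π ≫ h = φ n) : IsIso h := by
  have inj : ∀ K ∈ compacts C, ∀ x : K ⟶ H, x ≫ h = 0 → x = 0 := by
    intro K hK x hx
    obtain ⟨N, hN⟩ := hocolim_factor hH hK x
    obtain ⟨M₀, hM⟩ := seq_stable hG hP φ htri hK
    obtain ⟨z, rfl⟩ := hN (max N M₀) (le_max_left _ _)
    have hz : z ≫ φ (max N M₀) = 0 := by rw [← hh]; simpa using hx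
    rw [(hM _ (le_max_right _ _)).2 z hz, zero_comp]
  obtain ⟨Z, g, k, hT⟩ := distinguished_cocone_triangle h
  have hZ : IsZero Z := by
    refine hcg Z fun K hK f => ?_
    have h1 : f ≫ k = 0 :=
      adj_zero (shiftEquiv' C (-1 : ℤ) 1 (by simp)).toAdjunction (f ≫ k) h
        (show (f ≫ k) ≫ h⟦(1 : ℤ)⟧' = 0 by rw [Category.assoc, z31 hT, comp_zero])
        (inj _ (compact_shift hK (-1)))
    obtain ⟨w, rfl⟩ : ∃ w : K ⟶ F, f = w ≫ g := Triangle.coyoneda_exact₃ _ hT f h1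
    obtain ⟨M₀, hM⟩ := seq_stable hG hP φ htri hK
    obtain ⟨z, rfl⟩ := (hM M₀ le_rfl).1 w
    rw [← hh]
    simp [z12 hT]
  exact (Triangle.isZero₃_iff_isIso₁ _ hT).1 hZ

lemma main_aux {G Rm : ℤ → Set C} {A : ℤ} (hcg : CompactlyGenerated C) (hG : IsGenSeq C G)
    (hP : IsGPreApprox C G Rm A) {S : Set C} (hS : StabClass S)
    (happ : ∀ i : ℤ, ∀ F ∈ Rm i ∩ S,
      approxTriangle C F (gBarInt C G (-A - i) (A - i)) (Rm (i + 1) ∩ S))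
    (i : ℤ) (F : C) (hF : F ∈ Rm i ∩ S) : ApproxSeqConcl C G Rm A i F := by
  let St : ℕ → Type (max u v) := fun n => {x : (Σ E : C, E ⟶ F) //
    x.1 ∈ gBarIic C G (A - i) ∧ ∃ (D : C) (g : F ⟶ D) (h : D ⟶ x.1⟦(1 : ℤ)⟧),
      Triangle.mk x.2 g h ∈ distTriang C ∧ D ∈ Rm (i + (n : ℤ) + 1) ∩ S}
  have h0 : Nonempty (St 0) := by
    obtain ⟨E, D, f, g, h, hT, hE, hD⟩ := happ i F hF
    exact ⟨⟨⟨E, f⟩, gBarInt_sub G le_rfl hE, D, g, h, hT, by simpa using hD⟩⟩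
  have hs : ∀ n (x : St n), ∃ (y : St (n + 1)) (e : x.1.1 ⟶ y.1.1), e ≫ y.1.2 = x.1.2 := by
    rintro n ⟨⟨E, φ⟩, hE, hφ⟩
    obtain ⟨E', φ', e, he, hE', D, g, h, hT, hD⟩ :=
      step (A := A) hP.orthMetric hS happ hF.2 (b := A - i) (j := i + n + 1) (by omega) φ hE hφ
    refine ⟨⟨⟨E', φ'⟩, hE', D, g, h, hT, ?_⟩, e, he⟩
    have : i + ((n + 1 : ℕ) : ℤ) + 1 = i + n + 1 + 1 := by push_cast; ring
    rw [this]
    exact hD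
  choose nx en hen using hs
  let st : ∀ n, St n := fun n => Nat.rec (Classical.choice h0) (fun n x => nx n x) n
  let E : ℕ → C := fun n => (st n).1.1
  let e : ∀ n, E n ⟶ E (n + 1) := fun n => en n (st n)
  let φ : ∀ n, E n ⟶ F := fun n => (st n).1.2
  have hc : ∀ n, e n ≫ φ (n + 1) = φ n := fun n => hen n (st n)
  have hE : ∀ n, E n ∈ gBarIic C G (A - i) := fun n => (st n).2.1
  have htri : ∀ n : ℕ, ∃ (D : C) (g : F ⟶ D) (h : D ⟶ (E n)⟦(1 : ℤ)⟧),
      Triangle.mk (φ n) g h ∈ (distTriang C) ∧ D ∈ Rm (i + (n : ℤ) + 1) := fun n => by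
    obtain ⟨D, g, h, hT, hD⟩ := (st n).2.2
    exact ⟨D, g, h, hT, hD.1⟩
  clear_value E e φ
  refine ⟨⟨E, e, φ, hc, hE, htri, fun H π δ hH h hh => hocolim_iso hcg hG hP φ htri hH h hh⟩, ?_⟩
  obtain ⟨H, π, δ, hT⟩ := distinguished_cocone_triangle (oneMinusShift C E e)
  obtain ⟨h, hh⟩ := exY2 hT (seqDesc φ) (by
    apply seq_hom_ext
    intro n
    rw [← Category.assoc, seqInj_oneMinusShift, sub_comp, Category.assoc, seqInj_desc,
      seqInj_desc, hc, sub_self, comp_zero])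
  have hiso : IsIso h := hocolim_iso hcg hG hP φ htri (H := H) (π := π) (δ := δ) hT h
    (fun n => by rw [← hh, seqInj_desc])
  have hco : seqCoprod C E ∈ gBarIic C G (A - i) :=
    bigClosure.coprod (fun n : ULift.{v} ℕ => E n.down) (fun n => hE n.down) (Iso.refl _)
  have hHm : H ∈ gBarIic C G (A - i + 1) :=
    bigClosure.ext _ _ _ (rot_of_distTriang _ hT) (gBarIic_mono G (by omega) hco)
      (gBar_shift hG hco)
  exact bigClosure.retract (inv h) h (by simp) hHm

end Aux

theorem statement_9 (G Rm : ℤ → Set C) (A : ℤ)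
    (hcg : CompactlyGenerated C) (hG : IsGenSeq C G) :
    (IsWeakGApprox C G Rm A →
      ∀ i : ℤ, ∀ F ∈ Rm i, ApproxSeqConcl C G Rm A i F) ∧
    (IsWeakGQuasiApprox C G Rm A →
      ∀ i : ℤ, ∀ F ∈ Rm i ∩ closCompacts C Rm, ApproxSeqConcl C G Rm A i F) := by
  refine ⟨fun hW i F hF => ?_, fun hW i F hF => ?_⟩
  · refine main_aux hcg hG hW.toIsGPreApprox stab_univ ?_ i F ⟨hF, trivial⟩
    intro j X hX
    obtain ⟨E, D, f, g, h, hT, hE, hD⟩ := hW.approx j X hX.1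
    exact ⟨E, D, f, g, h, hT, hE, hD, trivial⟩
  · exact main_aux hcg hG hW.toIsGPreApprox (stab_clos hG hW.toIsGPreApprox) hW.approx i F hF

end GApprox
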